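/- Assume N ≥ 2. For every nonnegative weight vector w ∈ ℝ^N, the algebraic connectivity of the supra-Laplacian satisfies λ₂(L(w)) ≤ (1/2) · λ₂(L₁ + L₂). -/

import Mathlib

open Matrix

/-- The supra-Laplacian of a two-layer multiplex with layer Laplacians `L₁`, `L₂`
and one-to-one inter-layer weights `w`: the block matrix
`[[L₁ + W, −W], [−W, L₂ + W]]` with `W = diag w`. -/
noncomputable def supraLaplacian {N : ℕ} (L₁ L₂ : Matrix (Fin N) (Fin N) ℝ)
    (w : Fin N → ℝ) : Matrix (Fin N ⊕ Fin N) (Fin N ⊕ Fin N) ℝ :=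
  Matrix.fromBlocks (L₁ + Matrix.diagonal w) (-Matrix.diagonal w)
    (-Matrix.diagonal w) (L₂ + Matrix.diagonal w)

/-- Algebraic connectivity: the minimum of `vᵀ M v` over unit vectors `v`
orthogonal to the all-ones vector (the minimum is attained, so it equals the inf). -/
noncomputable def lambda2 {n : Type*} [Fintype n] (M : Matrix n n ℝ) : ℝ :=
  sInf {x : ℝ | ∃ v : n → ℝ, v ⬝ᵥ v = 1 ∧ v ⬝ᵥ (fun _ => 1) = 0 ∧ x = v ⬝ᵥ M *ᵥ v}

/-!
On a synchronized vector `(u, u)` the inter-layer coupling vanishes, so its supra-Laplacian energy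
is `uᵀ (L₁ + L₂) u`. If `u` is a unit vector orthogonal to `𝟙`, then `(u, u)` is orthogonal to `𝟙`
and has squared norm `2`, which is where the factor `1 / 2` comes from. The infima compared are
not the junk value `sInf = 0`: the unit sphere is compact, and it meets `𝟙ᗮ` in dimension at least
two.
-/

section AlgebraicConnectivity

variable {n : Type*} [Fintype n]

theorem inv_sqrt_smul_dotProduct_self {v : n → ℝ} (hv : v ≠ 0) :
    ((√(v ⬝ᵥ v))⁻¹ • v) ⬝ᵥ ((√(v ⬝ᵥ v))⁻¹ • v) = 1 := by
  have hpos : 0 < v ⬝ᵥ v := dotProduct_star_self_pos_iff.mpr hv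
  rw [smul_dotProduct, dotProduct_smul, smul_eq_mul, smul_eq_mul, ← mul_assoc, ← mul_inv,
    Real.mul_self_sqrt hpos.le, inv_mul_cancel₀ hpos.ne']

theorem exists_dotProduct_self_eq_one_and_dotProduct_one_eq_zero [Nontrivial n] :
    ∃ v : n → ℝ, v ⬝ᵥ v = 1 ∧ v ⬝ᵥ (fun _ => 1) = 0 := by
  classical
  obtain ⟨i, j, hij⟩ := exists_pair_ne n
  let v : n → ℝ := Pi.single i 1 - Pi.single j 1
  have hv : v ≠ 0 := fun h => by simpa [v, hij] using congrFun h i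
  have hv1 : v ⬝ᵥ (fun _ => 1) = 0 := by simp [v, sub_dotProduct]
  exact ⟨_, inv_sqrt_smul_dotProduct_self hv, by rw [smul_dotProduct, hv1, smul_zero]⟩

theorem le_lambda2 [Nontrivial n] {M : Matrix n n ℝ} {c : ℝ}
    (h : ∀ v : n → ℝ, v ⬝ᵥ v = 1 → v ⬝ᵥ (fun _ => 1) = 0 → c ≤ v ⬝ᵥ M *ᵥ v) :
    c ≤ lambda2 M := by
  obtain ⟨v, hv, hv1⟩ := exists_dotProduct_self_eq_one_and_dotProduct_one_eq_zero (n := n)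
  refine le_csInf ⟨_, v, hv, hv1, rfl⟩ ?_
  rintro _ ⟨u, hu, hu1, rfl⟩
  exact h u hu hu1

theorem bddBelow_image_dotProduct_mulVec_self (M : Matrix n n ℝ) :
    BddBelow ((fun v => v ⬝ᵥ M *ᵥ v) '' {v | v ⬝ᵥ v = 1}) := by
  have hsub : {v : n → ℝ | v ⬝ᵥ v = 1} ⊆ Metric.closedBall 0 1 := by
    intro v (hv : v ⬝ᵥ v = 1)
    rw [mem_closedBall_zero_iff, pi_norm_le_iff_of_nonneg zero_le_one]
    intro i
    have hi : v i * v i ≤ v ⬝ᵥ v :=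
      Finset.single_le_sum (fun j _ => mul_self_nonneg (v j)) (Finset.mem_univ i)
    rw [Real.norm_eq_abs, ← sq_le_one_iff_abs_le_one, sq]
    exact hi.trans_eq hv
  have hcont : Continuous fun v : n → ℝ => v ⬝ᵥ M *ᵥ v := by fun_prop
  exact ((isCompact_closedBall 0 1).bddBelow_image hcont.continuousOn).mono (Set.image_mono hsub)

theorem lambda2_le_dotProduct_mulVec (M : Matrix n n ℝ) {v : n → ℝ}
    (hv : v ⬝ᵥ v = 1) (hv1 : v ⬝ᵥ (fun _ => 1) = 0) :
    lambda2 M ≤ v ⬝ᵥ M *ᵥ v := by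
  refine csInf_le ((bddBelow_image_dotProduct_mulVec_self M).mono ?_) ⟨v, hv, hv1, rfl⟩
  rintro _ ⟨u, hu, -, rfl⟩
  exact ⟨u, hu, rfl⟩

theorem lambda2_mul_dotProduct_self_le (M : Matrix n n ℝ) {v : n → ℝ}
    (hv1 : v ⬝ᵥ (fun _ => 1) = 0) :
    lambda2 M * (v ⬝ᵥ v) ≤ v ⬝ᵥ M *ᵥ v := by
  rcases eq_or_ne v 0 with rfl | hv
  · simp
  have hpos : 0 < v ⬝ᵥ v := dotProduct_star_self_pos_iff.mpr hv
  have hle := lambda2_le_dotProduct_mulVec M (inv_sqrt_smul_dotProduct_self hv)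
    (by rw [smul_dotProduct, hv1, smul_zero])
  rwa [mulVec_smul, smul_dotProduct, dotProduct_smul, smul_eq_mul, smul_eq_mul, ← mul_assoc,
    ← mul_inv, Real.mul_self_sqrt hpos.le, le_inv_mul_iff₀' hpos] at hle

end AlgebraicConnectivity

section SupraLaplacian

variable {N : ℕ} (L₁ L₂ : Matrix (Fin N) (Fin N) ℝ) (w : Fin N → ℝ)

theorem supraLaplacian_mulVec_sumElim_self (u : Fin N → ℝ) :
    supraLaplacian L₁ L₂ w *ᵥ Sum.elim u u = Sum.elim (L₁ *ᵥ u) (L₂ *ᵥ u) := by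
  rw [supraLaplacian, fromBlocks_mulVec]
  simp only [Sum.elim_comp_inl, Sum.elim_comp_inr, add_mulVec, neg_mulVec,
    add_neg_cancel_right, add_comm (L₂ *ᵥ u), neg_add_cancel_left]

theorem sumElim_self_dotProduct_supraLaplacian_mulVec (u : Fin N → ℝ) :
    Sum.elim u u ⬝ᵥ supraLaplacian L₁ L₂ w *ᵥ Sum.elim u u = u ⬝ᵥ (L₁ + L₂) *ᵥ u := by
  rw [supraLaplacian_mulVec_sumElim_self, sumElim_dotProduct_sumElim, add_mulVec, dotProduct_add]

end SupraLaplacian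

theorem stmt9_general {N : ℕ} (hN : 2 ≤ N) (L₁ L₂ : Matrix (Fin N) (Fin N) ℝ)
    (w : Fin N → ℝ) :
    lambda2 (supraLaplacian L₁ L₂ w) ≤ (1 / 2) * lambda2 (L₁ + L₂) := by
  have : Nontrivial (Fin N) := Fin.nontrivial_iff_two_le.mpr hN
  suffices h : lambda2 (supraLaplacian L₁ L₂ w) * 2 ≤ lambda2 (L₁ + L₂) by linarith
  refine le_lambda2 fun u hu hu1 => ?_
  have hnorm : Sum.elim u u ⬝ᵥ Sum.elim u u = 2 := by
    rw [sumElim_dotProduct_sumElim, hu, one_add_one_eq_two]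
  have horth : Sum.elim u u ⬝ᵥ (fun _ => 1) = 0 := by
    rw [← Sum.elim_comp_inl_inr (fun _ : Fin N ⊕ Fin N => (1 : ℝ)), sumElim_dotProduct_sumElim]
    exact (congrArg₂ (· + ·) hu1 hu1).trans (add_zero 0)
  calc lambda2 (supraLaplacian L₁ L₂ w) * 2
      = lambda2 (supraLaplacian L₁ L₂ w) * (Sum.elim u u ⬝ᵥ Sum.elim u u) := by rw [hnorm]
    _ ≤ Sum.elim u u ⬝ᵥ supraLaplacian L₁ L₂ w *ᵥ Sum.elim u u :=
        lambda2_mul_dotProduct_self_le _ horth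
    _ = u ⬝ᵥ (L₁ + L₂) *ᵥ u := sumElim_self_dotProduct_supraLaplacian_mulVec L₁ L₂ w u

theorem stmt9 {N : ℕ} (hN : 2 ≤ N)
    (L₁ L₂ : Matrix (Fin N) (Fin N) ℝ)
    (hL₁ : L₁.PosSemidef) (hL₂ : L₂.PosSemidef)
    (hL₁1 : L₁ *ᵥ (fun _ => 1) = 0) (hL₂1 : L₂ *ᵥ (fun _ => 1) = 0)
    (w : Fin N → ℝ) (hw : ∀ i, 0 ≤ w i) :
    lambda2 (supraLaplacian L₁ L₂ w) ≤ (1 / 2) * lambda2 (L₁ + L₂) :=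
  stmt9_general hN L₁ L₂ w
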